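/- arXiv:2211.07153 — 2 statements merged into one kernel-verified Lean document; each statement's English description precedes it below -/
import Mathlib

section
/- Let C, D > 0 and let f(ρ,η) = C·ρ²(1−ρ)² + D·[ρ² + 6(1−ρ)(η² + (1−η)²) − 4(2−ρ)(η³ + (1−η)³) + 3(η² + (1−η)²)²]. Then for every α > max(C − 2D, 12D), the function g_α(ρ,η) = f(ρ,η) + (α/2)(ρ² + η²) has positive definite Hessian at every point of ℝ², and hence is strictly convex on ℝ². In particular assumption (A4) holds for the potential of Example 2.2. -/
noncomputable section

/-- The potential of Example 2.2. -/
def fEx (C D ρ η : ℝ) : ℝ :=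
  C * ρ ^ 2 * (1 - ρ) ^ 2 +
    D * (ρ ^ 2 + 6 * (1 - ρ) * (η ^ 2 + (1 - η) ^ 2)
      - 4 * (2 - ρ) * (η ^ 3 + (1 - η) ^ 3) + 3 * (η ^ 2 + (1 - η) ^ 2) ^ 2)

/-- The regularized potential `g_α(ρ,η) = f(ρ,η) + (α/2)(ρ² + η²)`. -/
def gEx (C D α ρ η : ℝ) : ℝ := fEx C D ρ η + α / 2 * (ρ ^ 2 + η ^ 2)

/-!
In the centred variables `s = ρ - 1/2` and `t = η - 1/2` one has `η² + (1 - η)² = 2t² + 1/2` and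
`η³ + (1 - η)³ = 3t² + 1/4`, so the `t²` terms of the coupling,
`6(1 - ρ) * 2t² - 4(2 - ρ) * 3t² = -12t²`, do not depend on `ρ`. Hence `g_α` is the sum of a quartic
in `s` and a quartic in `t`, neither with a cubic term, whose second derivatives are
`12Cs² + (α + 2D - C)` and `144Dt² + (α - 12D)`. The two lower bounds on `α` say exactly that the
constant terms are positive.
-/

section Separable

theorem strictConvexOn_prod_add {𝕜 E F β : Type*} [Semiring 𝕜] [PartialOrder 𝕜]
    [AddCommMonoid E] [AddCommMonoid F] [Module 𝕜 E] [Module 𝕜 F]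
    [AddCommMonoid β] [PartialOrder β] [IsOrderedCancelAddMonoid β] [Module 𝕜 β]
    {s : Set E} {t : Set F} {f : E → β} {g : F → β}
    (hf : StrictConvexOn 𝕜 s f) (hg : StrictConvexOn 𝕜 t g) :
    StrictConvexOn 𝕜 (s ×ˢ t) (fun p : E × F => f p.1 + g p.2) := by
  refine ⟨hf.1.prod hg.1, ?_⟩
  rintro ⟨x, z⟩ ⟨hx, hz⟩ ⟨y, w⟩ ⟨hy, hw⟩ hne a b ha hb hab
  calc f (a • x + b • y) + g (a • z + b • w)
      < (a • f x + b • f y) + (a • g z + b • g w) := by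
        by_cases hxy : x = y
        · have hzw : z ≠ w := fun hzw => hne (Prod.ext hxy hzw)
          exact add_lt_add_of_le_of_lt (hf.convexOn.2 hx hy ha.le hb.le hab)
            (hg.2 hz hw hzw ha hb hab)
        · exact add_lt_add_of_lt_of_le (hf.2 hx hy hxy ha hb hab)
            (hg.convexOn.2 hz hw ha.le hb.le hab)
    _ = a • (f x + g z) + b • (f y + g w) := by
        rw [smul_add, smul_add, add_add_add_comm]

/-- The quadratic form `(u, v) ↦ F_xx u² + 2 F_xy u v + F_yy v²` of the Hessian of `F` at `(x, y)`.
It is written with iterated one-variable derivatives, so it is meaningful only where these exist. -/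
def hessianForm (F : ℝ → ℝ → ℝ) (x y u v : ℝ) : ℝ :=
  deriv (fun r => deriv (fun r' => F r' y) r) x * u ^ 2
    + 2 * deriv (fun e => deriv (fun r => F r e) x) y * u * v
    + deriv (fun e => deriv (fun e' => F x e') e) y * v ^ 2

variable (p q : ℝ → ℝ)

theorem hessianForm_add (x y u v : ℝ) :
    hessianForm (fun r e => p r + q e) x y u v =
      deriv (deriv p) x * u ^ 2 + deriv (deriv q) y * v ^ 2 := by
  simp only [hessianForm, deriv_add_const', deriv_const_add', deriv_const, mul_zero, zero_mul,
    add_zero]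

variable {p q}

theorem hessianForm_add_pos {x y u v : ℝ} (hp : 0 < deriv (deriv p) x)
    (hq : 0 < deriv (deriv q) y) (huv : (u, v) ≠ (0, 0)) :
    0 < hessianForm (fun r e => p r + q e) x y u v := by
  rw [hessianForm_add]
  by_cases hu : u = 0
  · have hv : v ≠ 0 := fun hv => huv (Prod.ext hu hv)
    positivity
  · positivity

end Separable

/-- The quartic polynomial without cubic term when expanded about `m`. The coefficients are
normalised so that its second derivative is `a (x - m)² + b`. -/
def depressedQuartic (m a b c d x : ℝ) : ℝ :=
  a / 12 * (x - m) ^ 4 + b / 2 * (x - m) ^ 2 + c * (x - m) + d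

section DepressedQuartic

variable (m a b c d : ℝ)

theorem hasDerivAt_depressedQuartic (x : ℝ) :
    HasDerivAt (depressedQuartic m a b c d) (a / 3 * (x - m) ^ 3 + b * (x - m) + c) x := by
  have hsub : HasDerivAt (fun y => y - m) 1 x := (hasDerivAt_id x).sub_const m
  refine (((((hsub.pow 4).const_mul (a / 12)).add ((hsub.pow 2).const_mul (b / 2))).add
    (hsub.const_mul c)).add_const d).congr_deriv ?_
  push_cast
  ring

theorem deriv_deriv_depressedQuartic (x : ℝ) :
    deriv (deriv (depressedQuartic m a b c d)) x = a * (x - m) ^ 2 + b := by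
  have hderiv : deriv (depressedQuartic m a b c d) =
      fun y => a / 3 * (y - m) ^ 3 + b * (y - m) + c :=
    funext fun y => (hasDerivAt_depressedQuartic m a b c d y).deriv
  have hsub : HasDerivAt (fun y => y - m) 1 x := (hasDerivAt_id x).sub_const m
  rw [hderiv]
  refine ((((hsub.pow 3).const_mul (a / 3)).add (hsub.const_mul b)).add_const c).deriv.trans ?_
  push_cast
  ring

variable {a b}

theorem deriv_deriv_depressedQuartic_pos (ha : 0 ≤ a) (hb : 0 < b) (x : ℝ) :
    0 < deriv (deriv (depressedQuartic m a b c d)) x := by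
  rw [deriv_deriv_depressedQuartic]
  positivity

theorem strictConvexOn_depressedQuartic (ha : 0 ≤ a) (hb : 0 < b) :
    StrictConvexOn ℝ Set.univ (depressedQuartic m a b c d) :=
  strictConvexOn_univ_of_deriv2_pos
    (continuous_iff_continuousAt.2 fun x =>
      (hasDerivAt_depressedQuartic m a b c d x).continuousAt)
    (deriv_deriv_depressedQuartic_pos m c d ha hb)

end DepressedQuartic

theorem gEx_eq_depressedQuartic_add (C D α : ℝ) :
    gEx C D α = fun ρ η =>
      depressedQuartic (1 / 2) (12 * C) (α + 2 * D - C) (α / 2 - D) (C / 16 + D + α / 4) ρ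
        + depressedQuartic (1 / 2) (144 * D) (α - 12 * D) (α / 2) 0 η := by
  funext ρ η
  have hsq : η ^ 2 + (1 - η) ^ 2 = 2 * (η - 1 / 2) ^ 2 + 1 / 2 := by ring
  have hcube : η ^ 3 + (1 - η) ^ 3 = 3 * (η - 1 / 2) ^ 2 + 1 / 4 := by ring
  rw [gEx, fEx, hsq, hcube, depressedQuartic, depressedQuartic]
  ring

/-- for `C, D > 0` and `α > max(C − 2D, 12D)`, the function
`g_α = f + (α/2)(ρ²+η²)` has positive definite Hessian at every point of `ℝ²`
and is strictly convex on `ℝ²` (assumption (A4) for Example 2.2). -/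
theorem stmt3 (C D : ℝ) (hC : 0 < C) (hD : 0 < D) (α : ℝ)
    (hα : max (C - 2 * D) (12 * D) < α) :
    (∀ ρ η : ℝ, ∀ u v : ℝ, (u, v) ≠ (0, 0) →
      0 < deriv (fun r => deriv (fun r' => gEx C D α r' η) r) ρ * u ^ 2
          + 2 * deriv (fun e => deriv (fun r => gEx C D α r e) ρ) η * u * v
          + deriv (fun e => deriv (fun e' => gEx C D α ρ e') e) η * v ^ 2) ∧
    StrictConvexOn ℝ Set.univ (fun p : ℝ × ℝ => gEx C D α p.1 p.2) := by
  obtain ⟨hCα, hDα⟩ := max_lt_iff.1 hα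
  have hC' : 0 ≤ 12 * C := by positivity
  have hD' : 0 ≤ 144 * D := by positivity
  have hρ : 0 < α + 2 * D - C := by linarith
  have hη : 0 < α - 12 * D := sub_pos.2 hDα
  constructor
  · intro ρ η u v huv
    change 0 < hessianForm (gEx C D α) ρ η u v
    rw [gEx_eq_depressedQuartic_add]
    exact hessianForm_add_pos (deriv_deriv_depressedQuartic_pos _ _ _ hC' hρ ρ)
      (deriv_deriv_depressedQuartic_pos _ _ _ hD' hη η) huv
  · rw [gEx_eq_depressedQuartic_add, ← Set.univ_prod_univ]
    exact strictConvexOn_prod_add (strictConvexOn_depressedQuartic _ _ _ hC' hρ)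
      (strictConvexOn_depressedQuartic _ _ _ hD' hη)
end
end

section
/- Let d ≥ 1, γ_ρ, γ_η > 0, α > 0, and let f : ℝ² → ℝ be differentiable such that (ρ,η) ↦ f(ρ,η) + (α/4)(ρ² + η²) is convex on ℝ². Then for all smooth ℤ^d-periodic functions ρ, ρ̂, η, η̂ on ℝ^d: ‖ρ − ρ̂‖₁² + ‖η − η̂‖₁² ≤ C_E · E_α(ρ,η|ρ̂,η̂), where C_E = max(2/γ_ρ, 2/γ_η, 4/α) and E_α(ρ,η|ρ̂,η̂) = ∫_Ω (γ_ρ/2)|∇(ρ−ρ̂)|² + (γ_η/2)|∇(η−η̂)|² + (α/2)|ρ−ρ̂|² + (α/2)|η−η̂|² + f(ρ,η) − f(ρ̂,η̂) − ∂_ρ f(ρ̂,η̂)(ρ−ρ̂) − ∂_η f(ρ̂,η̂)(η−η̂) dx. -/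
noncomputable section
open MeasureTheory

/-- The periodicity cell `Ω = [0,1]^d`. -/
def cell (d : ℕ) : Set (Fin d → ℝ) := Set.Icc 0 1

/-- `ℤ^d`-periodicity of a function on `ℝ^d`. -/
def ZPeriodic {d : ℕ} (f : (Fin d → ℝ) → ℝ) : Prop :=
  ∀ (x : Fin d → ℝ) (k : Fin d → ℤ), f (x + fun i => (k i : ℝ)) = f x

/-- The gradient of a scalar field on `ℝ^d`. -/
def grad {d : ℕ} (f : (Fin d → ℝ) → ℝ) (x : Fin d → ℝ) : Fin d → ℝ :=
  fun i => fderiv ℝ f x (Pi.single i 1)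

/-- Squared `L²(Ω)` norm. -/
def l2sq {d : ℕ} (f : (Fin d → ℝ) → ℝ) : ℝ := ∫ x in cell d, (f x) ^ 2

/-- Squared `L²(Ω)` norm of a vector field. -/
def l2sqVec {d : ℕ} (F : (Fin d → ℝ) → Fin d → ℝ) : ℝ :=
  ∫ x in cell d, ∑ i, (F x i) ^ 2

/-- Squared `H¹(Ω)` norm, `‖f‖₁² = ‖f‖₀² + ‖∇f‖₀²`. -/
def h1sq {d : ℕ} (f : (Fin d → ℝ) → ℝ) : ℝ := l2sq f + l2sqVec (grad f)

/-- The relative energy functional `E_α(ρ,η|ρ̂,η̂)` (Bregman distance of the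
regularized energy). -/
def relE (d : ℕ) (γρ γη α : ℝ) (f : ℝ → ℝ → ℝ)
    (ρ η ρh ηh : (Fin d → ℝ) → ℝ) : ℝ :=
  ∫ x in cell d,
    γρ / 2 * ∑ i, (grad (fun y => ρ y - ρh y) x i) ^ 2
    + γη / 2 * ∑ i, (grad (fun y => η y - ηh y) x i) ^ 2
    + α / 2 * (ρ x - ρh x) ^ 2 + α / 2 * (η x - ηh x) ^ 2
    + f (ρ x) (η x) - f (ρh x) (ηh x)
    - deriv (fun r => f r (ηh x)) (ρh x) * (ρ x - ρh x)
    - deriv (fun e => f (ρh x) e) (ηh x) * (η x - ηh x)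

/-! The `α / 4`-shift `G` of `f` is convex, and the relative energy is the sum of the squared
`L²` norms weighted by `γ_ρ / 2`, `γ_η / 2`, `α / 4`, `α / 4` and of the integral of the Bregman
divergence of `G`. This divergence is nonnegative, so dropping it and comparing the weights with
`1 / C_E` gives the estimate. Splitting the integral requires the divergence to be integrable,
although `f` is only assumed differentiable: by convexity it lies between `0` and the continuous
second difference `G(x) + G(2y - x) - 2 G(y)`. -/

section BregmanDivergence

variable {E : Type*} [NormedAddCommGroup E] [NormedSpace ℝ E] {F G : E → ℝ} {s : Set E} {x y : E}

/-- The Bregman divergence `F(x) - F(y) - F'(y)(x - y)`, the pointwise form of the relative energy;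
it is meaningful when `F` is differentiable at `y`. -/
def bregmanDiv (F : E → ℝ) (x y : E) : ℝ := F x - F y - fderiv ℝ F y (x - y)

lemma bregmanDiv_add (hF : DifferentiableAt ℝ F y) (hG : DifferentiableAt ℝ G y) :
    bregmanDiv (fun z => F z + G z) x y = bregmanDiv F x y + bregmanDiv G x y := by
  simp only [bregmanDiv, fderiv_fun_add hF hG, add_apply]
  ring

lemma bregmanDiv_const_mul (c : ℝ) (hF : DifferentiableAt ℝ F y) :
    bregmanDiv (fun z => c * F z) x y = c * bregmanDiv F x y := by
  simp only [bregmanDiv, fderiv_const_mul hF, smul_apply, smul_eq_mul]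
  ring

lemma bregmanDiv_clm_sq (L : E →L[ℝ] ℝ) (x y : E) :
    bregmanDiv (fun z => L z ^ 2) x y = L (x - y) ^ 2 := by
  have hL : HasFDerivAt (fun z => L z ^ 2) ((2 * L y) • L) y := by
    simpa using L.hasFDerivAt.pow 2
  simp only [bregmanDiv, hL.fderiv, smul_apply, smul_eq_mul, map_sub]
  ring

lemma bregmanDiv_nonneg (hF : ConvexOn ℝ s F) (hx : x ∈ s) (hy : y ∈ s)
    (hFy : DifferentiableAt ℝ F y) : 0 ≤ bregmanDiv F x y := by
  have hconv := hF.comp_affineMap (AffineMap.lineMap y x : ℝ →ᵃ[ℝ] E)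
  have hderiv : HasDerivAt (F ∘ AffineMap.lineMap y x) (fderiv ℝ F y (x - y)) (0 : ℝ) := by
    refine HasFDerivAt.comp_hasDerivAt (0 : ℝ) ?_ AffineMap.hasDerivAt_lineMap
    simpa using hFy.hasFDerivAt
  have hslope := hconv.le_slope_of_hasDerivAt (by simpa using hy) (by simpa using hx)
    one_pos hderiv
  simpa [bregmanDiv, slope_def_field] using hslope

lemma bregmanDiv_add_bregmanDiv_reflection (F : E → ℝ) (x y : E) :
    bregmanDiv F x y + bregmanDiv F (y + (y - x)) y = F x + F (y + (y - x)) - 2 * F y := by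
  simp only [bregmanDiv, add_sub_cancel_left, map_sub]
  ring

lemma bregmanDiv_le_second_difference (hF : ConvexOn ℝ s F) (hy : y ∈ s) (hyx : y + (y - x) ∈ s)
    (hFy : DifferentiableAt ℝ F y) :
    bregmanDiv F x y ≤ F x + F (y + (y - x)) - 2 * F y := by
  rw [← bregmanDiv_add_bregmanDiv_reflection]
  exact le_add_of_nonneg_right (bregmanDiv_nonneg hF hyx hy hFy)

variable {X : Type*} [TopologicalSpace X] [MeasurableSpace X] [OpensMeasurableSpace X] {u v : X → E}

-- `fderiv ℝ F` need not be continuous, but each of its values is a limit of difference quotients.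
lemma measurable_fderiv_apply_of_continuous (hF : Differentiable ℝ F) (hu : Continuous u)
    (hv : Continuous v) : Measurable fun t => fderiv ℝ F (u t) (v t) := by
  have hFc := hF.continuous
  refine measurable_of_tendsto_metrizable
    (f := fun (n : ℕ) t => (n : ℝ) • (F (u t + (n : ℝ)⁻¹ • v t) - F (u t)))
    (fun n => Continuous.measurable (by fun_prop)) (tendsto_pi_nhds.mpr fun t => ?_)
  exact ((hF (u t)).hasFDerivAt.lim_real (v t)).comp tendsto_natCast_atTop_atTop

lemma measurable_bregmanDiv (hF : Differentiable ℝ F) (hu : Continuous u) (hv : Continuous v) :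
    Measurable fun t => bregmanDiv F (u t) (v t) :=
  ((hF.continuous.comp hu).measurable.sub (hF.continuous.comp hv).measurable).sub
    (measurable_fderiv_apply_of_continuous hF hv (hu.sub hv))

lemma integrableOn_bregmanDiv [T2Space X] {μ : Measure X} [IsFiniteMeasureOnCompacts μ]
    (hconv : ConvexOn ℝ Set.univ F) (hF : Differentiable ℝ F) (hu : Continuous u)
    (hv : Continuous v) {K : Set X} (hK : IsCompact K) :
    IntegrableOn (fun t => bregmanDiv F (u t) (v t)) K μ := by
  have hFc := hF.continuous
  have hbound : Continuous fun t => F (u t) + F (v t + (v t - u t)) - 2 * F (v t) := by fun_prop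
  refine (hbound.continuousOn.integrableOn_compact hK).mono'
    (measurable_bregmanDiv hF hu hv).aestronglyMeasurable (.of_forall fun t => ?_)
  rw [Real.norm_of_nonneg (bregmanDiv_nonneg hconv trivial trivial (hF _))]
  exact bregmanDiv_le_second_difference hconv trivial trivial (hF _)

end BregmanDivergence

lemma fderiv_apply_eq_smul_deriv_add_smul_deriv {𝕜 V : Type*} [NontriviallyNormedField 𝕜]
    [NormedAddCommGroup V] [NormedSpace 𝕜 V] {F : 𝕜 × 𝕜 → V} {q : 𝕜 × 𝕜}
    (hF : DifferentiableAt 𝕜 F q) (w : 𝕜 × 𝕜) :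
    fderiv 𝕜 F q w
      = w.1 • deriv (fun r => F (r, q.2)) q.1 + w.2 • deriv (fun r => F (q.1, r)) q.2 := by
  have hfst : HasDerivAt (fun r => F (r, q.2)) (fderiv 𝕜 F q (1, 0)) q.1 :=
    hF.hasFDerivAt.comp_hasDerivAt q.1 ((hasDerivAt_id q.1).prodMk (hasDerivAt_const q.1 q.2))
  have hsnd : HasDerivAt (fun r => F (q.1, r)) (fderiv 𝕜 F q (0, 1)) q.2 :=
    hF.hasFDerivAt.comp_hasDerivAt q.2 ((hasDerivAt_const q.2 q.1).prodMk (hasDerivAt_id q.2))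
  rw [hfst.deriv, hsnd.deriv, ← map_smul, ← map_smul, ← map_add]
  simp

section CellIntegrals

variable {d : ℕ} {w : (Fin d → ℝ) → ℝ}

lemma integrableOn_cell (hw : Continuous w) : IntegrableOn w (cell d) :=
  hw.integrableOn_Icc

lemma continuous_sum_sq_grad (hw : ContDiff ℝ 1 w) : Continuous fun x => ∑ i, grad w x i ^ 2 := by
  have := hw.continuous_fderiv one_ne_zero
  unfold grad
  fun_prop

lemma l2sq_nonneg (w : (Fin d → ℝ) → ℝ) : 0 ≤ l2sq w :=
  integral_nonneg fun _ => sq_nonneg _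

lemma l2sqVec_nonneg (W : (Fin d → ℝ) → Fin d → ℝ) : 0 ≤ l2sqVec W :=
  integral_nonneg fun _ => Finset.sum_nonneg fun _ _ => sq_nonneg _

end CellIntegrals

section RelativeEnergy

variable {γρ γη α : ℝ} {f : ℝ → ℝ → ℝ}

/-- The potential `f(ρ,η) + (α/4)(ρ² + η²)`, whose convexity is the structural assumption; it takes
half of the regularization `(α/2)(ρ² + η²)`, the other half being left for coercivity. It is defined
on `ℝ × ℝ` to allow Fréchet derivatives. -/
def convexifiedPotential (α : ℝ) (f : ℝ → ℝ → ℝ) (p : ℝ × ℝ) : ℝ :=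
  f p.1 p.2 + α / 4 * (p.1 ^ 2 + p.2 ^ 2)

lemma differentiable_convexifiedPotential (hf : Differentiable ℝ fun p : ℝ × ℝ => f p.1 p.2) :
    Differentiable ℝ (convexifiedPotential α f) := by
  unfold convexifiedPotential
  fun_prop

lemma bregmanDiv_convexifiedPotential {p q : ℝ × ℝ}
    (hf : DifferentiableAt ℝ (fun p : ℝ × ℝ => f p.1 p.2) q) :
    bregmanDiv (convexifiedPotential α f) p q
      = bregmanDiv (fun p : ℝ × ℝ => f p.1 p.2) p q
        + α / 4 * ((p.1 - q.1) ^ 2 + (p.2 - q.2) ^ 2) := by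
  unfold convexifiedPotential
  rw [bregmanDiv_add hf (by fun_prop), bregmanDiv_const_mul _ (by fun_prop),
    bregmanDiv_add (by fun_prop) (by fun_prop)]
  congr 3
  · exact bregmanDiv_clm_sq (.fst ℝ ℝ ℝ) p q
  · exact bregmanDiv_clm_sq (.snd ℝ ℝ ℝ) p q

variable {d : ℕ} {ρ ρh η ηh : (Fin d → ℝ) → ℝ}

lemma relE_eq_integral_add_bregmanDiv (hf : Differentiable ℝ fun p : ℝ × ℝ => f p.1 p.2) :
    relE d γρ γη α f ρ η ρh ηh = ∫ x in cell d,
      (γρ / 2 * ∑ i, grad (fun y => ρ y - ρh y) x i ^ 2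
        + γη / 2 * ∑ i, grad (fun y => η y - ηh y) x i ^ 2
        + α / 4 * (ρ x - ρh x) ^ 2 + α / 4 * (η x - ηh x) ^ 2
        + bregmanDiv (convexifiedPotential α f) (ρ x, η x) (ρh x, ηh x)) := by
  refine integral_congr_ae (.of_forall fun x => ?_)
  simp only [bregmanDiv_convexifiedPotential (hf _)]
  simp only [bregmanDiv, fderiv_apply_eq_smul_deriv_add_smul_deriv (hf _), smul_eq_mul,
    Prod.fst_sub, Prod.snd_sub]
  ring

lemma relE_eq_weighted_norms_add_integral_bregmanDiv
    (hf : Differentiable ℝ fun p : ℝ × ℝ => f p.1 p.2)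
    (hconv : ConvexOn ℝ Set.univ (convexifiedPotential α f))
    (hρ : ContDiff ℝ 1 ρ) (hρh : ContDiff ℝ 1 ρh) (hη : ContDiff ℝ 1 η) (hηh : ContDiff ℝ 1 ηh) :
    relE d γρ γη α f ρ η ρh ηh
      = γρ / 2 * l2sqVec (grad fun x => ρ x - ρh x) + γη / 2 * l2sqVec (grad fun x => η x - ηh x)
        + α / 4 * l2sq (fun x => ρ x - ρh x) + α / 4 * l2sq (fun x => η x - ηh x)
        + ∫ x in cell d, bregmanDiv (convexifiedPotential α f) (ρ x, η x) (ρh x, ηh x) := by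
  have iGρ := (integrableOn_cell (continuous_sum_sq_grad (hρ.sub hρh))).const_mul (γρ / 2)
  have iGη := (integrableOn_cell (continuous_sum_sq_grad (hη.sub hηh))).const_mul (γη / 2)
  have sρ : Continuous fun x => (ρ x - ρh x) ^ 2 :=
    (hρ.continuous.fun_sub hρh.continuous).fun_pow 2
  have iρ := (integrableOn_cell sρ).const_mul (α / 4)
  have sη : Continuous fun x => (η x - ηh x) ^ 2 :=
    (hη.continuous.fun_sub hηh.continuous).fun_pow 2
  have iη := (integrableOn_cell sη).const_mul (α / 4)
  have iB := integrableOn_bregmanDiv (μ := volume) hconv (differentiable_convexifiedPotential hf)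
    (hρ.continuous.prodMk hη.continuous) (hρh.continuous.prodMk hηh.continuous)
    (isCompact_Icc : IsCompact (cell d))
  have iGρη := iGρ.fun_add iGη
  have iGρηρ := iGρη.fun_add iρ
  rw [relE_eq_integral_add_bregmanDiv hf, integral_add (iGρηρ.fun_add iη) iB,
    integral_add iGρηρ iη, integral_add iGρη iρ, integral_add iGρ iGη]
  simp only [integral_const_mul]
  rfl

lemma weighted_norms_le_relE (hf : Differentiable ℝ fun p : ℝ × ℝ => f p.1 p.2)
    (hconv : ConvexOn ℝ Set.univ (convexifiedPotential α f))
    (hρ : ContDiff ℝ 1 ρ) (hρh : ContDiff ℝ 1 ρh) (hη : ContDiff ℝ 1 η) (hηh : ContDiff ℝ 1 ηh) :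
    γρ / 2 * l2sqVec (grad fun x => ρ x - ρh x) + γη / 2 * l2sqVec (grad fun x => η x - ηh x)
        + α / 4 * l2sq (fun x => ρ x - ρh x) + α / 4 * l2sq (fun x => η x - ηh x)
      ≤ relE d γρ γη α f ρ η ρh ηh := by
  rw [relE_eq_weighted_norms_add_integral_bregmanDiv hf hconv hρ hρh hη hηh]
  exact le_add_of_nonneg_right <| integral_nonneg fun _ =>
    bregmanDiv_nonneg hconv trivial trivial (differentiable_convexifiedPotential hf _)

end RelativeEnergy

lemma le_mul_mul_of_inv_le {k C a : ℝ} (hk : 0 < k) (hC : k⁻¹ ≤ C) (ha : 0 ≤ a) :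
    a ≤ C * (k * a) := by
  rw [← mul_assoc]
  exact le_mul_of_one_le_left ha ((inv_le_iff_one_le_mul₀ hk).mp hC)

theorem stmt5_general (d : ℕ) (γρ γη α : ℝ)
    (hγρ : 0 < γρ) (hγη : 0 < γη) (hα : 0 < α)
    (f : ℝ → ℝ → ℝ) (hf : Differentiable ℝ (fun p : ℝ × ℝ => f p.1 p.2))
    (hconv : ConvexOn ℝ Set.univ
      (fun p : ℝ × ℝ => f p.1 p.2 + α / 4 * (p.1 ^ 2 + p.2 ^ 2)))
    (ρ ρh η ηh : (Fin d → ℝ) → ℝ)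
    (hρ : ContDiff ℝ 1 ρ) (hρh : ContDiff ℝ 1 ρh) (hη : ContDiff ℝ 1 η) (hηh : ContDiff ℝ 1 ηh) :
    h1sq (fun x => ρ x - ρh x) + h1sq (fun x => η x - ηh x)
      ≤ max (2 / γρ) (max (2 / γη) (4 / α)) * relE d γρ γη α f ρ η ρh ηh := by
  set C := max (2 / γρ) (max (2 / γη) (4 / α)) with hC
  have hCρ : (γρ / 2)⁻¹ ≤ C := by simp [hC]
  have hCη : (γη / 2)⁻¹ ≤ C := by simp [hC]
  have hCα : (α / 4)⁻¹ ≤ C := by simp [hC]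
  have hC0 : 0 ≤ C := (by positivity : 0 ≤ (α / 4)⁻¹).trans hCα
  refine le_trans ?_ (mul_le_mul_of_nonneg_left (weighted_norms_le_relE hf hconv hρ hρh hη hηh) hC0)
  simp only [h1sq, mul_add C]
  linarith [le_mul_mul_of_inv_le (half_pos hγρ) hCρ (l2sqVec_nonneg (grad fun x => ρ x - ρh x)),
    le_mul_mul_of_inv_le (half_pos hγη) hCη (l2sqVec_nonneg (grad fun x => η x - ηh x)),
    le_mul_mul_of_inv_le (by positivity) hCα (l2sq_nonneg fun x => ρ x - ρh x),
    le_mul_mul_of_inv_le (by positivity) hCα (l2sq_nonneg fun x => η x - ηh x)]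

/-- first estimate of Lemma 5.1: coercivity of the relative
energy, `‖ρ−ρ̂‖₁² + ‖η−η̂‖₁² ≤ C_E · E_α(ρ,η|ρ̂,η̂)` with
`C_E = max(2/γ_ρ, 2/γ_η, 4/α)`. -/
theorem stmt5 (d : ℕ) (hd : 1 ≤ d) (γρ γη α : ℝ)
    (hγρ : 0 < γρ) (hγη : 0 < γη) (hα : 0 < α)
    (f : ℝ → ℝ → ℝ) (hf : Differentiable ℝ (fun p : ℝ × ℝ => f p.1 p.2))
    (hconv : ConvexOn ℝ Set.univ
      (fun p : ℝ × ℝ => f p.1 p.2 + α / 4 * (p.1 ^ 2 + p.2 ^ 2)))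
    (ρ ρh η ηh : (Fin d → ℝ) → ℝ)
    (hρ : ContDiff ℝ (⊤ : ℕ∞) ρ) (hρh : ContDiff ℝ (⊤ : ℕ∞) ρh)
    (hη : ContDiff ℝ (⊤ : ℕ∞) η) (hηh : ContDiff ℝ (⊤ : ℕ∞) ηh)
    (pρ : ZPeriodic ρ) (pρh : ZPeriodic ρh)
    (pη : ZPeriodic η) (pηh : ZPeriodic ηh) :
    h1sq (fun x => ρ x - ρh x) + h1sq (fun x => η x - ηh x)
      ≤ max (2 / γρ) (max (2 / γη) (4 / α)) * relE d γρ γη α f ρ η ρh ηh :=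
  stmt5_general d γρ γη α hγρ hγη hα f hf hconv ρ ρh η ηh
    (hρ.of_le (by simp)) (hρh.of_le (by simp)) (hη.of_le (by simp)) (hηh.of_le (by simp))
end
end
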